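/- arXiv:0904.0211 — 2 statements merged into one kernel-verified Lean document; each statement's English description precedes it below -/
import Mathlib

section
/- Fix z ∈ ℂ. If v = (v₊, v₋, v₀) : ℝ → ℂ³ is a solution of the pseudo Jahn–Teller system −i v'(s) = V_PJT(s,z) v(s), then the function w : ℝ → ℂ³ defined by w(s) = (v₊(−s), v₋(−s), −v₀(−s)) is also a solution of the same system. -/
open Matrix

/-- The pseudo Jahn–Teller matrix `V_PJT(s,z)`: the 3×3 Hermitian complex matrix with rows
`(s, 0, z/√2)`, `(0, −s, conj(z)/√2)`, `(conj(z)/√2, z/√2, 0)`. -/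
noncomputable def VPJT (s : ℝ) (z : ℂ) : Matrix (Fin 3) (Fin 3) ℂ :=
  !![(s : ℂ), 0, z / (Real.sqrt 2 : ℂ);
     0, -(s : ℂ), (starRingEnd ℂ) z / (Real.sqrt 2 : ℂ);
     (starRingEnd ℂ) z / (Real.sqrt 2 : ℂ), z / (Real.sqrt 2 : ℂ), 0]

/-- If `v = (v₊, v₋, v₀)` solves `−i v' = V_PJT(s,z) v`, then
`w(s) = (v₊(−s), v₋(−s), −v₀(−s))` solves the same system. -/
theorem VPJT_solution_reflection (z : ℂ) (v : ℝ → Fin 3 → ℂ)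
    (hv : ∀ s : ℝ, HasDerivAt v (Complex.I • (VPJT s z).mulVec (v s)) s) :
    ∀ s : ℝ, HasDerivAt (fun s : ℝ => ![v (-s) 0, v (-s) 1, -v (-s) 2])
      (Complex.I • (VPJT s z).mulVec ![v (-s) 0, v (-s) 1, -v (-s) 2]) s := by
  intro s
  have h : HasDerivAt (fun t : ℝ => v (-t))
      ((-1 : ℝ) • (Complex.I • (VPJT (-s) z).mulVec (v (-s)))) s :=
    HasDerivAt.scomp s (hv (-s)) (hasDerivAt_neg s)
  rw [hasDerivAt_pi] at h ⊢
  intro i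
  fin_cases i
  · refine (h 0).congr_deriv ?_
    simp [VPJT, dotProduct, Fin.sum_univ_three]
    ring
  · refine (h 1).congr_deriv ?_
    simp [VPJT, dotProduct, Fin.sum_univ_three]
    ring
  · refine (h 2).neg.congr_deriv ?_
    simp [VPJT, dotProduct, Fin.sum_univ_three]
    ring
end

section
/- Fix z ∈ ℂ. Let f = (f₊, f₋, f₀) : ℝ → ℂ³ be differentiable and satisfy, for all t ∈ ℝ: −i f₊'(t) = f₊(t) + (z/√2) f₀(t), −i f₋'(t) = −f₋(t) + (conj(z)/√2) f₀(t), and −i (f₀(t) + 2t f₀'(t)) = (conj(z)/√2) f₊(t) + (z/√2) f₋(t). Then v : ℝ → ℂ³ defined by v(s) = (f₊(s²/2), f₋(s²/2), s·f₀(s²/2)) is a solution of the pseudo Jahn–Teller system −i v'(s) = V_PJT(s,z) v(s). -/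
open Matrix

/-- If `f = (f₊, f₋, f₀)` is differentiable and satisfies
`−i f₊' = f₊ + (z/√2) f₀`, `−i f₋' = −f₋ + (conj z/√2) f₀` and
`−i (f₀ + 2t f₀') = (conj z/√2) f₊ + (z/√2) f₋`, then
`v(s) = (f₊(s²/2), f₋(s²/2), s·f₀(s²/2))` solves `−i v' = V_PJT(s,z) v`. -/
theorem VPJT_solution_of_even_system (z : ℂ) (fp fm f0 : ℝ → ℂ)
    (hfp : Differentiable ℝ fp) (hfm : Differentiable ℝ fm) (hf0 : Differentiable ℝ f0)
    (heqp : ∀ t : ℝ, -Complex.I * deriv fp t = fp t + (z / (Real.sqrt 2 : ℂ)) * f0 t)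
    (heqm : ∀ t : ℝ, -Complex.I * deriv fm t
      = -fm t + ((starRingEnd ℂ) z / (Real.sqrt 2 : ℂ)) * f0 t)
    (heq0 : ∀ t : ℝ, -Complex.I * (f0 t + 2 * (t : ℂ) * deriv f0 t)
      = ((starRingEnd ℂ) z / (Real.sqrt 2 : ℂ)) * fp t + (z / (Real.sqrt 2 : ℂ)) * fm t) :
    ∀ s : ℝ, HasDerivAt
      (fun s : ℝ => ![fp (s ^ 2 / 2), fm (s ^ 2 / 2), (s : ℂ) * f0 (s ^ 2 / 2)])
      (Complex.I • (VPJT s z).mulVec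
        ![fp (s ^ 2 / 2), fm (s ^ 2 / 2), (s : ℂ) * f0 (s ^ 2 / 2)]) s := by
  intro s
  have hq : HasDerivAt (fun s : ℝ => s ^ 2 / 2) s s := by
    have h := ((hasDerivAt_id s).pow 2).div_const 2
    refine HasDerivAt.congr_deriv (f := fun s : ℝ => s ^ 2 / 2) h ?_
    simp
  have hp := (hfp (s ^ 2 / 2)).hasDerivAt.scomp s hq
  have hm := (hfm (s ^ 2 / 2)).hasDerivAt.scomp s hq
  have h0 := (hf0 (s ^ 2 / 2)).hasDerivAt.scomp s hq
  have hs : HasDerivAt (fun s : ℝ => (s : ℂ)) 1 s := Complex.ofRealCLM.hasDerivAt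
  have h0' := hs.mul h0
  have ep := heqp (s ^ 2 / 2)
  have em := heqm (s ^ 2 / 2)
  have e0 := heq0 (s ^ 2 / 2)
  have hI : Complex.I * Complex.I = -1 := Complex.I_mul_I
  rw [hasDerivAt_pi]
  intro i
  fin_cases i
  · refine HasDerivAt.congr_deriv (f := fun s : ℝ => fp (s ^ 2 / 2)) hp ?_
    simp [VPJT]
    linear_combination (Complex.I * s) * ep + s * deriv fp (s ^ 2 / 2) * hI
  · refine HasDerivAt.congr_deriv (f := fun s : ℝ => fm (s ^ 2 / 2)) hm ?_
    simp [VPJT]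
    linear_combination (Complex.I * s) * em + s * deriv fm (s ^ 2 / 2) * hI
  · refine HasDerivAt.congr_deriv (f := fun s : ℝ => (s : ℂ) * f0 (s ^ 2 / 2)) h0' ?_
    push_cast at e0
    simp [VPJT]
    linear_combination Complex.I * e0 + (f0 (s ^ 2 / 2) + s ^ 2 * deriv f0 (s ^ 2 / 2)) * hI
end
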